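/- Let d ≥ 1 and 1 < p ≤ 2. There exists a constant C > 0 such that for every Schwartz function f on ℝ^d: ‖f‖_{L^p(ℝ^d)} ≤ C·‖V_g f‖_{L^p(ℝ^{2d})}. -/

import Mathlib

open MeasureTheory Complex Real
open scoped ENNReal RealInnerProductSpace

noncomputable section

abbrev E (d : ℕ) : Type := EuclideanSpace ℝ (Fin d)

/-- Phase space `ℝ^{2d} = ℝ^d × ℝ^d`. -/
abbrev P (d : ℕ) : Type := E d × E d

/-- The complex conjugate of the wave packet `π(z)g`, Gaussian window `g(y)=exp(-|y|²/2)`: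
`conj (π(z)g) (y) = exp(-i y·ξ)·g(y-x)` for `z = (x,ξ)`. -/
def pkbar (d : ℕ) (z : P d) (y : E d) : ℂ :=
  Complex.exp (-Complex.I * (⟪y, z.2⟫ : ℂ)) * Real.exp (-‖y - z.1‖ ^ 2 / 2)

/-- The short-time Fourier transform with Gaussian window:
`V_g u (x,ξ) = ∫ u(y)·conj(g(y-x))·exp(-i y·ξ) dy`. -/
def stft (d : ℕ) (u : E d → ℂ) (z : P d) : ℂ := ∫ y, u y * pkbar d z y

/-!
For fixed `x`, the function `ξ ↦ V_φ f(x, ξ)` is, up to scaling, the Fourier transform of the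
localized function `F = conj (φ(· - x)) f`. Reinserting two copies of the window `γ = φ(· - x)`
costs nothing after integration over `x`, and it makes up for the failure of
`‖F‖_p ≲ ‖𝓕 F‖_p` when `p < 2`. By Parseval, with `p'` the conjugate exponent,
`‖γF‖₂² = ⟨F, |γ|²F⟩ ≤ ‖𝓕 F‖_p ‖𝓕(|γ|²F)‖_{p'}`, and since `p' ≥ 2` the last factor is at most
`max ‖|γ|²F‖₁ ‖|γ|²F‖₂ ≲ ‖γF‖₂`. Hence `‖γF‖₂ ≲ ‖𝓕 F‖_p`, and Hölder gives
`‖γ²F‖_p ≲ ‖𝓕 F‖_p`, uniformly in `x`. Integrating the `p`-th power over `x` and applying Fubini,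
the left-hand side becomes `‖φ³‖_p ‖f‖_p` and the right-hand side `‖V_φ f‖_p`. As the `L^p` norms
are Bochner integrals, `V_φ f` must also be known to lie in `L^p`. Decay in `x` is immediate from
that of `φ` and `f`, and decay in `ξ` reduces to it because the Fourier transform rotates phase
space: `|V_{𝓕φ} 𝓕f|` at `((2π)⁻¹ξ, -2πx)` is `|V_φ f(x, ξ)|`.
-/

open FourierTransform SchwartzMap

section LpNorm

variable {α F : Type*} [MeasurableSpace α] {μ : Measure α} [NormedAddCommGroup F] {f : α → F}

theorem eLpNorm_le_max_eLpNorm_top {r q : ℝ≥0∞} (hr : r ≠ 0) (hrq : r ≤ q) :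
    eLpNorm f q μ ≤ max (eLpNorm f r μ) (eLpNorm f ∞ μ) := by
  obtain rfl | hq := eq_or_ne q ∞
  · exact le_max_right _ _
  set M := max (eLpNorm f r μ) (eLpNorm f ∞ μ)
  obtain hM | hM := eq_or_ne M ∞
  · exact hM ▸ le_top
  have hr' : r ≠ ∞ := ne_top_of_le_ne_top hq hrq
  have hr_pos : 0 < r.toReal := ENNReal.toReal_pos hr hr'
  have hsub : 0 ≤ q.toReal - r.toReal := sub_nonneg.mpr (ENNReal.toReal_mono hq hrq)
  have hsplit (t : ℝ≥0∞) : t ^ q.toReal = t ^ (q.toReal - r.toReal) * t ^ r.toReal := by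
    rw [← ENNReal.rpow_add_of_nonneg _ _ hsub hr_pos.le, sub_add_cancel]
  have hsup : ∀ᵐ x ∂μ, ‖f x‖ₑ ≤ M :=
    (enorm_ae_le_eLpNormEssSup f μ).mono fun x hx => hx.trans (le_max_right _ _)
  have hint : ∫⁻ x, ‖f x‖ₑ ^ r.toReal ∂μ ≤ M ^ r.toReal := by
    rw [← ENNReal.rpow_inv_le_iff hr_pos, ← one_div,
      ← eLpNorm_eq_lintegral_rpow_enorm_toReal hr hr']
    exact le_max_left _ _
  rw [eLpNorm_eq_lintegral_rpow_enorm_toReal (hr.bot_lt.trans_le hrq).ne' hq, one_div,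
    ENNReal.rpow_inv_le_iff (by linarith)]
  calc ∫⁻ x, ‖f x‖ₑ ^ q.toReal ∂μ
      ≤ ∫⁻ x, M ^ (q.toReal - r.toReal) * ‖f x‖ₑ ^ r.toReal ∂μ := by
        refine lintegral_mono_ae (hsup.mono fun x hx => ?_)
        rw [hsplit]
        gcongr
    _ = M ^ (q.toReal - r.toReal) * ∫⁻ x, ‖f x‖ₑ ^ r.toReal ∂μ :=
        lintegral_const_mul' _ _ (ENNReal.rpow_ne_top_of_nonneg hsub hM)
    _ ≤ M ^ q.toReal := by
        rw [hsplit]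
        gcongr

theorem eLpNorm_star_smul [NormedSpace ℂ F] (γ : α → ℂ) (p : ℝ≥0∞) :
    eLpNorm (star γ • f) p μ = eLpNorm (γ • f) p μ :=
  eLpNorm_congr_norm_ae (.of_forall fun x => by simp [norm_smul])

theorem enorm_integral_inner_le_eLpNorm_mul_eLpNorm [InnerProductSpace ℂ F] {p q : ℝ≥0∞}
    [p.HolderConjugate q] {g : α → F} (hf : AEStronglyMeasurable f μ)
    (hg : AEStronglyMeasurable g μ) :
    ‖∫ x, inner ℂ (f x) (g x) ∂μ‖ₑ ≤ eLpNorm f p μ * eLpNorm g q μ := by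
  refine (enorm_integral_le_lintegral_enorm _).trans ?_
  rw [← eLpNorm_one_eq_lintegral_enorm]
  simpa using eLpNorm_le_eLpNorm_mul_eLpNorm'_of_norm (p := p) (q := q) (r := 1) hf hg (inner ℂ) 1
    (.of_forall fun x => by simpa using norm_inner_le_norm (𝕜 := ℂ) (f x) (g x))

theorem toReal_eLpNorm_ofReal {p : ℝ} (hp : 0 < p) (hf : AEStronglyMeasurable f μ) :
    (eLpNorm f (.ofReal p) μ).toReal = (∫ x, ‖f x‖ ^ p ∂μ) ^ (1 / p) := by
  rw [toReal_eLpNorm hf, lpNorm_eq_integral_norm_rpow_toReal (ENNReal.ofReal_pos.mpr hp).ne'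
    ENNReal.ofReal_ne_top hf, ENNReal.toReal_ofReal hp.le, one_div]

end LpNorm

theorem exists_holderConjugate_two_le {p : ℝ≥0∞} (hp1 : 1 ≤ p) (hp2 : p ≤ 2) :
    ∃ q, p.HolderConjugate q ∧ 2 ≤ q := by
  refine ⟨(1 - p⁻¹)⁻¹, .inv_one_sub_inv' hp1, ?_⟩
  rw [ENNReal.le_inv_iff_le_inv, tsub_le_iff_right, ← ENNReal.inv_two_add_inv_two]
  gcongr

section FourierLp

variable {V : Type*} [NormedAddCommGroup V] [InnerProductSpace ℝ V]

theorem hasTemperateGrowth_star {γ : V → ℂ} (hγ : γ.HasTemperateGrowth) :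
    (star γ).HasTemperateGrowth :=
  (Complex.conjCLE : ℂ →L[ℝ] ℂ).hasTemperateGrowth.comp hγ

variable [FiniteDimensional ℝ V] [MeasurableSpace V] [BorelSpace V]

theorem eLpNorm_fourier_top_le {F : Type*} [NormedAddCommGroup F] [NormedSpace ℂ F] (f : 𝓢(V, F)) :
    eLpNorm (𝓕 f : 𝓢(V, F)) ∞ ≤ eLpNorm f 1 := by
  rw [eLpNorm_one_eq_lintegral_enorm]
  refine eLpNormEssSup_le_of_ae_enorm_bound (.of_forall fun w => ?_)
  rw [fourier_coe, Real.fourier_eq]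
  refine (enorm_integral_le_lintegral_enorm _).trans_eq (lintegral_congr fun v => ?_)
  rw [← ofReal_norm, Circle.norm_smul, ofReal_norm]

variable {H : Type*} [NormedAddCommGroup H] [InnerProductSpace ℂ H]

theorem enorm_integral_inner_self (f : 𝓢(V, H)) :
    ‖∫ x, inner ℂ (f x) (f x)‖ₑ = eLpNorm f 2 ^ 2 := by
  rw [← inner_toL2_toL2_eq f f volume, inner_self_eq_norm_sq_to_K, enorm_pow,
    ← ofReal_norm, RCLike.norm_ofReal, abs_norm, norm_toLp,
    ENNReal.ofReal_toReal (f.eLpNorm_lt_top 2 volume).ne]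

variable [CompleteSpace H]

theorem eLpNorm_fourier_two (f : 𝓢(V, H)) : eLpNorm (𝓕 f : 𝓢(V, H)) 2 = eLpNorm f 2 := by
  have h := norm_fourier_toL2_eq f
  rwa [norm_toLp, norm_toLp, ENNReal.toReal_eq_toReal_iff' (eLpNorm_lt_top _ 2 volume).ne
    (eLpNorm_lt_top f 2 volume).ne] at h

theorem eLpNorm_fourier_le_max (f : 𝓢(V, H)) {q : ℝ≥0∞} (hq : 2 ≤ q) :
    eLpNorm (𝓕 f : 𝓢(V, H)) q ≤ max (eLpNorm f 1) (eLpNorm f 2) := by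
  rw [← eLpNorm_fourier_two f, max_comm]
  exact (eLpNorm_le_max_eLpNorm_top two_ne_zero hq).trans
    (max_le_max_left _ (eLpNorm_fourier_top_le f))

theorem enorm_integral_inner_le_eLpNorm_fourier_mul {p q : ℝ≥0∞} [p.HolderConjugate q]
    (f g : 𝓢(V, H)) :
    ‖∫ x, inner ℂ (f x) (g x)‖ₑ ≤ eLpNorm (𝓕 f : 𝓢(V, H)) p * eLpNorm (𝓕 g : 𝓢(V, H)) q := by
  rw [← integral_inner_fourier_fourier f g]
  exact enorm_integral_inner_le_eLpNorm_mul_eLpNorm (𝓕 f).continuous.aestronglyMeasurable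
    (𝓕 g).continuous.aestronglyMeasurable

theorem eLpNorm_two_smul_le {p : ℝ≥0∞} {γ : V → ℂ} (hγ : γ.HasTemperateGrowth) (f : 𝓢(V, H))
    (hp1 : 1 ≤ p) (hp2 : p ≤ 2) :
    eLpNorm (γ • ⇑f) 2 ≤ max (eLpNorm γ 2) (eLpNorm γ ∞) * eLpNorm (𝓕 f : 𝓢(V, H)) p := by
  obtain ⟨q, _, hq⟩ := exists_holderConjugate_two_le hp1 hp2
  obtain ⟨h, hh⟩ : ∃ h : 𝓢(V, H), ⇑h = γ • ⇑f :=
    ⟨smulLeftCLM H γ f, funext (smulLeftCLM_apply_apply hγ f)⟩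
  obtain ⟨k, hk⟩ : ∃ k : 𝓢(V, H), ⇑k = star γ • ⇑h :=
    ⟨smulLeftCLM H (star γ) h, funext (smulLeftCLM_apply_apply (hasTemperateGrowth_star hγ) h)⟩
  have hγm : AEStronglyMeasurable γ := hγ.1.continuous.aestronglyMeasurable
  have hhm : AEStronglyMeasurable h := h.continuous.aestronglyMeasurable
  have hinner : ∀ x, inner ℂ (h x) (h x) = inner ℂ (f x) (k x) := fun x => by
    rw [hk, Pi.smul_apply', Pi.star_apply, inner_smul_right, hh, Pi.smul_apply', inner_smul_left,
      starRingEnd_apply]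
  rw [← hh]
  set M := max (eLpNorm γ 2) (eLpNorm γ ∞)
  set A := eLpNorm (𝓕 f : 𝓢(V, H)) p
  set N := eLpNorm h 2
  have hk_le : eLpNorm (𝓕 k : 𝓢(V, H)) q ≤ M * N := by
    refine (eLpNorm_fourier_le_max k hq).trans ?_
    rw [max_mul, hk, eLpNorm_star_smul, eLpNorm_star_smul]
    exact max_le_max (eLpNorm_smul_le_mul_eLpNorm hhm hγm)
      (eLpNorm_smul_le_eLpNorm_top_mul_eLpNorm 2 hhm γ)
  have hsq : N * N ≤ M * A * N := by
    calc N * N = ‖∫ x, inner ℂ (f x) (k x)‖ₑ := by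
          rw [← sq, ← enorm_integral_inner_self, integral_congr_ae (.of_forall hinner)]
      _ ≤ A * (M * N) :=
          (enorm_integral_inner_le_eLpNorm_fourier_mul f k).trans (mul_le_mul_right hk_le A)
      _ = M * A * N := by ring
  obtain hN | hN := eq_or_ne N 0
  · rw [hN]; exact zero_le
  · exact (ENNReal.mul_le_mul_iff_left hN (h.eLpNorm_lt_top 2 volume).ne).mp hsq

theorem eLpNorm_smul_smul_le {p : ℝ≥0∞} {γ : V → ℂ} (hγ : γ.HasTemperateGrowth) (f : 𝓢(V, H))
    (hp1 : 1 ≤ p) (hp2 : p ≤ 2) :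
    eLpNorm (γ • γ • ⇑f) p ≤ eLpNorm γ (p⁻¹ - 2⁻¹)⁻¹ *
      (max (eLpNorm γ 2) (eLpNorm γ ∞) * eLpNorm (𝓕 f : 𝓢(V, H)) p) := by
  have : ENNReal.HolderTriple (p⁻¹ - 2⁻¹)⁻¹ 2 p := by
    constructor
    rw [inv_inv, tsub_add_cancel_of_le (ENNReal.inv_le_inv.mpr hp2)]
  have hγm : AEStronglyMeasurable γ := hγ.1.continuous.aestronglyMeasurable
  exact (eLpNorm_smul_le_mul_eLpNorm (hγm.smul f.continuous.aestronglyMeasurable) hγm).trans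
    (mul_le_mul_right (eLpNorm_two_smul_le hγ f hp1 hp2) _)

end FourierLp

section ProductLp

variable {α β F G : Type*} [MeasurableSpace α] [MeasurableSpace β] {μ : Measure α} {ν : Measure β}
  [SFinite ν] [NormedAddCommGroup F] [NormedAddCommGroup G] {p : ℝ≥0∞}

theorem eLpNorm_prod_le_of_forall_eLpNorm_le {u : α × β → F} {v : α × β → G} {C : ℝ≥0∞}
    (hp0 : p ≠ 0) (hp : p ≠ ∞) (hC : C ≠ ∞) (hv : AEStronglyMeasurable v (μ.prod ν))
    (h : ∀ x, eLpNorm (fun y => u (x, y)) p ν ≤ C * eLpNorm (fun y => v (x, y)) p ν) :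
    eLpNorm u p (μ.prod ν) ≤ C * eLpNorm v p (μ.prod ν) := by
  have hp_pos : 0 < p.toReal := ENNReal.toReal_pos hp0 hp
  have hfiber (x : α) : ∫⁻ y, ‖u (x, y)‖ₑ ^ p.toReal ∂ν ≤
      C ^ p.toReal * ∫⁻ y, ‖v (x, y)‖ₑ ^ p.toReal ∂ν := by
    have := h x
    rwa [eLpNorm_eq_lintegral_rpow_enorm_toReal hp0 hp, one_div, ENNReal.rpow_inv_le_iff hp_pos,
      eLpNorm_eq_lintegral_rpow_enorm_toReal hp0 hp, ENNReal.mul_rpow_of_nonneg _ _ hp_pos.le,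
      one_div, ENNReal.rpow_inv_rpow hp_pos.ne'] at this
  rw [eLpNorm_eq_lintegral_rpow_enorm_toReal hp0 hp, one_div, ENNReal.rpow_inv_le_iff hp_pos,
    eLpNorm_eq_lintegral_rpow_enorm_toReal hp0 hp, ENNReal.mul_rpow_of_nonneg _ _ hp_pos.le,
    one_div, ENNReal.rpow_inv_rpow hp_pos.ne', lintegral_prod _ (hv.enorm.pow_const _),
    ← lintegral_const_mul' _ _ (ENNReal.rpow_ne_top_of_nonneg hp_pos.le hC)]
  exact (lintegral_prod_le _).trans (lintegral_mono hfiber)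

end ProductLp

section HaarLp

variable {V F : Type*} [NormedAddCommGroup V] [MeasurableSpace V] [BorelSpace V]
  [NormedAddCommGroup F] {μ : Measure V}

theorem eLpNorm_comp_smul [NormedSpace ℝ V] [FiniteDimensional ℝ V] [μ.IsAddHaarMeasure]
    (f : V → F) {r : ℝ} (hr : r ≠ 0) {p : ℝ≥0∞} (hp : p ≠ ∞) :
    eLpNorm (fun w => f (r • w)) p μ =
      ENNReal.ofReal |(r ^ Module.finrank ℝ V)⁻¹| ^ (1 / p).toReal * eLpNorm f p μ := by
  rw [← smul_eq_mul, ← eLpNorm_smul_measure_of_ne_top hp, ← Measure.map_addHaar_smul μ hr]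
  exact (Homeomorph.smulOfNeZero r hr).measurableEmbedding.eLpNorm_map_measure.symm

theorem eLpNorm_comp_sub_right [μ.IsAddRightInvariant] (f : V → F) (p : ℝ≥0∞) (x : V) :
    eLpNorm (fun y => f (y - x)) p μ = eLpNorm f p μ := by
  conv_rhs => rw [← (measurePreserving_sub_right μ x).map_eq]
  exact (measurableEmbedding_subRight x).eLpNorm_map_measure.symm

theorem eLpNorm_prod_comp_sub_smul [SecondCountableTopology V] [NormedSpace ℂ F] [SFinite μ]
    [μ.IsAddLeftInvariant] [μ.IsNegInvariant] {φ : V → ℂ} {f : V → F}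
    (hφ : StronglyMeasurable φ) (hf : StronglyMeasurable f) {p : ℝ≥0∞}
    (hp0 : p ≠ 0) (hp : p ≠ ∞) :
    eLpNorm (fun z : V × V => φ (z.2 - z.1) • f z.2) p (μ.prod μ) =
      eLpNorm φ p μ * eLpNorm f p μ := by
  have hφm : Measurable fun y => ‖φ y‖ₑ ^ p.toReal := hφ.enorm.pow_const _
  have hfm : Measurable fun y => ‖f y‖ₑ ^ p.toReal := hf.enorm.pow_const _
  have hm : Measurable fun z : V × V => ‖φ (z.2 - z.1)‖ₑ ^ p.toReal * ‖f z.2‖ₑ ^ p.toReal :=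
    (hφm.comp (measurable_snd.sub measurable_fst)).mul (hfm.comp measurable_snd)
  simp only [eLpNorm_eq_lintegral_rpow_enorm_toReal hp0 hp, enorm_smul,
    ENNReal.mul_rpow_of_nonneg _ _ ENNReal.toReal_nonneg]
  rw [← ENNReal.mul_rpow_of_nonneg _ _ (by positivity), lintegral_prod_symm _ hm.aemeasurable,
    ← lintegral_const_mul _ hfm]
  congr 1
  refine lintegral_congr fun y => ?_
  have hφym : Measurable fun x => ‖φ (y - x)‖ₑ ^ p.toReal :=
    hφm.comp (measurable_const.sub measurable_id)
  calc ∫⁻ x, ‖φ (y - x)‖ₑ ^ p.toReal * ‖f y‖ₑ ^ p.toReal ∂μ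
      = (∫⁻ x, ‖φ (y - x)‖ₑ ^ p.toReal ∂μ) * ‖f y‖ₑ ^ p.toReal := lintegral_mul_const _ hφym
    _ = (∫⁻ x, ‖φ x‖ₑ ^ p.toReal ∂μ) * ‖f y‖ₑ ^ p.toReal := by
        rw [lintegral_sub_left_eq_self (fun x => ‖φ x‖ₑ ^ p.toReal) y]

end HaarLp

section SchwartzMap

variable {V F : Type*} [NormedAddCommGroup V] [NormedSpace ℝ V] [NormedAddCommGroup F]
  [NormedSpace ℝ F]

theorem exists_schwartzMap_eq_pow_succ (φ : 𝓢(V, ℂ)) (n : ℕ) :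
    ∃ χ : 𝓢(V, ℂ), ⇑χ = ⇑φ ^ (n + 1) :=
  ⟨smulLeftCLM ℂ (⇑φ ^ n) φ, funext fun y => by
    rw [smulLeftCLM_apply_apply (φ.hasTemperateGrowth.pow n), smul_eq_mul, Pi.pow_apply,
      Pi.pow_apply, pow_succ]⟩

theorem exists_one_add_norm_pow_mul_norm_le (f : 𝓢(V, F)) (N : ℕ) :
    ∃ A, ∀ y, (1 + ‖y‖) ^ N * ‖f y‖ ≤ A :=
  ⟨_, fun y => by
    simpa using one_add_le_sup_seminorm_apply (𝕜 := ℝ) (m := (N, 0)) le_rfl le_rfl f y⟩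

theorem integrable_one_add_norm_pow_mul_norm [MeasurableSpace V] [BorelSpace V]
    [SecondCountableTopology V] (μ : Measure V) [μ.HasTemperateGrowth] (f : 𝓢(V, F)) (N : ℕ) :
    Integrable (fun y => (1 + ‖y‖) ^ N * ‖f y‖) μ := by
  simp_rw [add_comm (1 : ℝ), add_pow, one_pow, mul_one, Finset.sum_mul]
  refine integrable_finsetSum _ fun i _ => ?_
  simpa only [mul_assoc, mul_left_comm] using (f.integrable_pow_mul μ i).const_mul (N.choose i : ℝ)

end SchwartzMap

section ShortTimeFourier

variable {V : Type*} [NormedAddCommGroup V] [InnerProductSpace ℝ V]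

/-- The wave packet `π(z)φ(y) = e^{i y·ξ} φ(y - x)`, `z = (x, ξ)`: the time-frequency shift by `z`
of the window `φ`. Frequencies are angular, as opposed to Mathlib's `𝓕`, so that `ξ` corresponds
to `(2π)⁻¹ξ` there. -/
def wavePacket (φ : V → ℂ) (z : V × V) (y : V) : ℂ := cexp (I * ⟪y, z.2⟫) * φ (y - z.1)

/-- The short-time Fourier transform `V_φ f(z) = ⟨f, π(z)φ⟩_{L²}` of `f` with window `φ`. -/
def shortTimeFourier [MeasureSpace V] (φ f : V → ℂ) (z : V × V) : ℂ :=
  ∫ y, inner ℂ (wavePacket φ z y) (f y)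

theorem norm_wavePacket (φ : V → ℂ) (z : V × V) (y : V) : ‖wavePacket φ z y‖ = ‖φ (y - z.1)‖ := by
  rw [wavePacket, norm_mul, norm_exp_I_mul_ofReal, one_mul]

theorem continuous_wavePacket {φ : V → ℂ} (hφ : Continuous φ) :
    Continuous fun q : (V × V) × V => wavePacket φ q.1 q.2 := by
  unfold wavePacket
  fun_prop

variable [FiniteDimensional ℝ V] [MeasurableSpace V] [BorelSpace V]

theorem stronglyMeasurable_shortTimeFourier {φ f : V → ℂ} (hφ : Continuous φ) (hf : Continuous f) :
    StronglyMeasurable (shortTimeFourier φ f) := by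
  have : Continuous fun q : (V × V) × V => inner ℂ (wavePacket φ q.1 q.2) (f q.2) :=
    (continuous_wavePacket hφ).inner (hf.comp continuous_snd)
  exact this.stronglyMeasurable.integral_prod_right'

theorem norm_shortTimeFourier_le (φ f : V → ℂ) (z : V × V) :
    ‖shortTimeFourier φ f z‖ ≤ ∫ y, ‖φ (y - z.1)‖ * ‖f y‖ := by
  refine (norm_integral_le_integral_norm _).trans_eq (integral_congr_ae (.of_forall fun y => ?_))
  simp [norm_wavePacket, mul_comm]

theorem fourier_star_smul_eq_shortTimeFourier (φ f : 𝓢(V, ℂ)) (x w : V) :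
    𝓕 (star (φ.compSubConstCLM ℂ x : V → ℂ) • (f : V → ℂ)) w =
      shortTimeFourier φ f (x, (2 * π) • w) := by
  rw [Real.fourier_eq', shortTimeFourier]
  refine integral_congr_ae (.of_forall fun y => ?_)
  simp only [wavePacket, real_inner_smul_right, RCLike.inner_apply, Pi.smul_apply', Pi.star_apply,
    compSubConstCLM_apply, RCLike.star_def, smul_eq_mul, map_mul, ← Complex.exp_conj, conj_I,
    conj_ofNat, conj_ofReal, ofReal_mul, ofReal_neg, ofReal_ofNat]
  ring_nf

theorem fourier_wavePacket (φ : V → ℂ) (x ξ w : V) :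
    𝓕 (wavePacket φ (x, ξ)) w =
      cexp (I * ⟪x, ξ⟫) * wavePacket (𝓕 φ) ((2 * π)⁻¹ • ξ, -(2 * π) • x) w := by
  rw [wavePacket, Real.fourier_eq', Real.fourier_eq', ← mul_assoc, ← integral_const_mul,
    ← integral_add_right_eq_self _ x]
  refine integral_congr_ae (.of_forall fun u => ?_)
  simp only [wavePacket, add_sub_cancel_right, smul_eq_mul, inner_add_left, inner_sub_right,
    real_inner_smul_right, ← mul_assoc, ← Complex.exp_add]
  congr 2
  rw [real_inner_comm w x]
  push_cast
  field_simp
  ring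

theorem integrable_wavePacket (φ : 𝓢(V, ℂ)) (z : V × V) : Integrable (wavePacket φ z) :=
  (φ.integrable.comp_sub_right z.1).mono
    ((continuous_wavePacket φ.continuous).comp (.prodMk_right z)).aestronglyMeasurable
    (.of_forall fun y => (norm_wavePacket φ z y).le)

theorem norm_shortTimeFourier_fourier (φ f : 𝓢(V, ℂ)) (x ξ : V) :
    ‖shortTimeFourier (𝓕 φ : 𝓢(V, ℂ)) (𝓕 f : 𝓢(V, ℂ)) ((2 * π)⁻¹ • ξ, -(2 * π) • x)‖ =
      ‖shortTimeFourier φ f (x, ξ)‖ := by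
  have hinv : 𝓕⁻ ((𝓕 f : 𝓢(V, ℂ)) : V → ℂ) = f := by
    rw [← fourierInv_coe, FourierTransform.fourierInv_fourier_eq]
  have hplancherel : ∫ w, inner ℂ (𝓕 (wavePacket φ (x, ξ)) w) ((𝓕 f : 𝓢(V, ℂ)) w) =
      shortTimeFourier φ f (x, ξ) := by
    rw [shortTimeFourier, ← hinv]
    simpa using! VectorFourier.integral_sesq_fourierIntegral_eq_neg_flip (innerSL ℂ)
      (L := innerₗ V) continuous_fourierChar continuous_inner (integrable_wavePacket φ (x, ξ))
      ((𝓕 f : 𝓢(V, ℂ)).integrable (μ := volume))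
  have hphase : ‖cexp (I * ⟪x, ξ⟫)‖ = 1 := norm_exp_I_mul_ofReal _
  rw [← hplancherel]
  simp_rw [fourier_wavePacket, ← smul_eq_mul (cexp (I * ⟪x, ξ⟫)), inner_smul_left]
  rw [integral_const_mul, norm_mul, RCLike.norm_conj, hphase, one_mul,
    shortTimeFourier, fourier_coe]

theorem exists_one_add_norm_fst_pow_mul_norm_shortTimeFourier_le (φ f : 𝓢(V, ℂ)) (N : ℕ) :
    ∃ A, ∀ z : V × V, (1 + ‖z.1‖) ^ N * ‖shortTimeFourier φ f z‖ ≤ A := by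
  obtain ⟨A, hA⟩ := exists_one_add_norm_pow_mul_norm_le φ N
  refine ⟨A * ∫ y, (1 + ‖y‖) ^ N * ‖f y‖, fun z => ?_⟩
  have hpeetre (y : V) : 1 + ‖z.1‖ ≤ (1 + ‖y - z.1‖) * (1 + ‖y‖) := by
    have h : ‖z.1‖ ≤ ‖y‖ + ‖y - z.1‖ := by simpa using norm_sub_le y (y - z.1)
    nlinarith [norm_nonneg y, norm_nonneg (y - z.1)]
  grw [norm_shortTimeFourier_le]
  rw [← integral_const_mul, ← integral_const_mul]
  refine integral_mono_of_nonneg (.of_forall fun y => by positivity)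
    ((integrable_one_add_norm_pow_mul_norm volume f N).const_mul A) (.of_forall fun y => ?_)
  calc (1 + ‖z.1‖) ^ N * (‖φ (y - z.1)‖ * ‖f y‖)
      ≤ ((1 + ‖y - z.1‖) * (1 + ‖y‖)) ^ N * (‖φ (y - z.1)‖ * ‖f y‖) := by
        gcongr
        exact hpeetre y
    _ = (1 + ‖y - z.1‖) ^ N * ‖φ (y - z.1)‖ * ((1 + ‖y‖) ^ N * ‖f y‖) := by
        rw [mul_pow, mul_mul_mul_comm]
    _ ≤ A * ((1 + ‖y‖) ^ N * ‖f y‖) := by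
        gcongr
        exact hA _

theorem exists_one_add_norm_snd_pow_mul_norm_shortTimeFourier_le (φ f : 𝓢(V, ℂ)) (N : ℕ) :
    ∃ B, ∀ z : V × V, (1 + ‖z.2‖) ^ N * ‖shortTimeFourier φ f z‖ ≤ B := by
  obtain ⟨B, hB⟩ := exists_one_add_norm_fst_pow_mul_norm_shortTimeFourier_le (𝓕 φ) (𝓕 f) N
  refine ⟨(2 * π) ^ N * B, fun ⟨x, ξ⟩ => ?_⟩
  have hπ : 1 ≤ 2 * π := by linarith [pi_gt_three]
  have hξ : 1 + ‖ξ‖ ≤ 2 * π * (1 + ‖(2 * π)⁻¹ • ξ‖) := by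
    rw [norm_smul, norm_inv, Real.norm_of_nonneg (by positivity), mul_add, mul_one,
      mul_inv_cancel_left₀ (by positivity)]
    gcongr
  calc (1 + ‖ξ‖) ^ N * ‖shortTimeFourier φ f (x, ξ)‖
      ≤ (2 * π * (1 + ‖(2 * π)⁻¹ • ξ‖)) ^ N * ‖shortTimeFourier φ f (x, ξ)‖ := by gcongr
    _ = (2 * π) ^ N * ((1 + ‖(2 * π)⁻¹ • ξ‖) ^ N * ‖shortTimeFourier φ f (x, ξ)‖) := by
        rw [mul_pow, mul_assoc]
    _ ≤ (2 * π) ^ N * B := by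
        rw [← norm_shortTimeFourier_fourier]
        gcongr
        exact hB (_, _)

theorem memLp_shortTimeFourier (φ f : 𝓢(V, ℂ)) (p : ℝ≥0∞) :
    MemLp (shortTimeFourier φ f) p := by
  have : (volume : Measure (V × V)).IsAddHaarMeasure := Measure.prod.instIsAddHaarMeasure _ _
  obtain ⟨N, hN⟩ := Measure.HasTemperateGrowth.exists_eLpNorm_lt_top p
    (μ := (volume : Measure (V × V))) inferInstance
  obtain ⟨A, hA⟩ := exists_one_add_norm_fst_pow_mul_norm_shortTimeFourier_le φ f N
  obtain ⟨B, hB⟩ := exists_one_add_norm_snd_pow_mul_norm_shortTimeFourier_le φ f N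
  have hm : StronglyMeasurable (shortTimeFourier φ f) :=
    stronglyMeasurable_shortTimeFourier φ.continuous f.continuous
  refine ⟨hm.aestronglyMeasurable, (eLpNorm_le_mul_eLpNorm_of_ae_le_mul (c := max A B)
    (.of_forall fun z => ?_) p).trans_lt (ENNReal.mul_lt_top ENNReal.ofReal_lt_top hN)⟩
  rw [Real.rpow_neg (by positivity), Real.rpow_natCast, norm_inv, norm_pow,
    Real.norm_of_nonneg (by positivity), ← div_eq_mul_inv, le_div_iff₀' (by positivity),
    Prod.norm_def]
  obtain h | h := max_choice ‖z.1‖ ‖z.2‖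
  · rw [h]; exact le_max_of_le_left (hA z)
  · rw [h]; exact le_max_of_le_right (hB z)

end ShortTimeFourier

section Embedding

variable {V : Type*} [NormedAddCommGroup V] [InnerProductSpace ℝ V] [FiniteDimensional ℝ V]
  [MeasurableSpace V] [BorelSpace V]

theorem exists_eLpNorm_pow_three_smul_le (φ : 𝓢(V, ℂ)) {p : ℝ≥0∞} (hp1 : 1 ≤ p) (hp2 : p ≤ 2) :
    ∃ C ≠ ∞, ∀ (f : 𝓢(V, ℂ)) (x : V), eLpNorm (fun y => φ (y - x) ^ 3 • f y) p volume ≤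
      C * eLpNorm (fun ξ => shortTimeFourier φ f (x, ξ)) p volume := by
  set c := ENNReal.ofReal |((2 * π) ^ Module.finrank ℝ V)⁻¹| ^ (1 / p).toReal with hc
  set r := (p⁻¹ - 2⁻¹)⁻¹
  have hφ (q : ℝ≥0∞) : eLpNorm φ q volume ≠ ∞ := (φ.eLpNorm_lt_top q volume).ne
  have hc_top : c ≠ ∞ := ENNReal.rpow_ne_top_of_nonneg ENNReal.toReal_nonneg ENNReal.ofReal_ne_top
  refine ⟨eLpNorm φ r volume * (max (eLpNorm φ 2 volume) (eLpNorm φ ∞ volume) * c),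
    ENNReal.mul_ne_top (hφ r)
      (ENNReal.mul_ne_top (max_lt (hφ 2).lt_top (hφ ∞).lt_top).ne hc_top), fun f x => ?_⟩
  set γ := φ.compSubConstCLM ℂ x
  have hγ (q : ℝ≥0∞) : eLpNorm γ q volume = eLpNorm φ q volume := eLpNorm_comp_sub_right φ q x
  obtain ⟨h, hh⟩ : ∃ h : 𝓢(V, ℂ), ⇑h = star ⇑γ • ⇑f :=
    ⟨smulLeftCLM ℂ (star ⇑γ) f,
      funext (smulLeftCLM_apply_apply (hasTemperateGrowth_star γ.hasTemperateGrowth) f)⟩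
  have hfourier : eLpNorm (𝓕 h : 𝓢(V, ℂ)) p volume =
      c * eLpNorm (fun ξ => shortTimeFourier φ f (x, ξ)) p volume := by
    rw [hc, ← eLpNorm_comp_smul _ (by positivity) (hp2.trans_lt ENNReal.ofNat_lt_top).ne,
      fourier_coe, hh]
    exact congrArg (eLpNorm · p volume) (funext (fourier_star_smul_eq_shortTimeFourier φ f x))
  have hnorm : eLpNorm (fun y => φ (y - x) ^ 3 • f y) p volume =
      eLpNorm (⇑γ • ⇑γ • ⇑h) p volume :=
    eLpNorm_congr_norm_ae (.of_forall fun y => by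
      simp only [hh, γ, compSubConstCLM_apply, Pi.smul_apply', Pi.mul_apply, Pi.star_apply,
        smul_eq_mul, norm_mul, norm_pow, norm_star]
      ring)
  have hlocal := eLpNorm_smul_smul_le γ.hasTemperateGrowth h hp1 hp2
  rwa [← hnorm, hγ, hγ, hγ, hfourier, ← mul_assoc, ← mul_assoc, mul_assoc (eLpNorm φ _ _)] at hlocal

theorem exists_eLpNorm_pow_three_mul_eLpNorm_le (φ : 𝓢(V, ℂ)) {p : ℝ≥0∞} (hp1 : 1 ≤ p)
    (hp2 : p ≤ 2) :
    ∃ C ≠ ∞, ∀ f : 𝓢(V, ℂ), eLpNorm (⇑φ ^ 3) p volume * eLpNorm f p volume ≤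
      C * eLpNorm (shortTimeFourier φ f) p volume := by
  obtain ⟨C, hC, hle⟩ := exists_eLpNorm_pow_three_smul_le φ hp1 hp2
  have hp0 : p ≠ 0 := (one_pos.trans_le hp1).ne'
  have hp : p ≠ ∞ := (hp2.trans_lt ENNReal.ofNat_lt_top).ne
  refine ⟨C, hC, fun f => ?_⟩
  rw [← eLpNorm_prod_comp_sub_smul (φ.continuous.pow 3).stronglyMeasurable
    f.continuous.stronglyMeasurable hp0 hp]
  exact eLpNorm_prod_le_of_forall_eLpNorm_le hp0 hp hC
    (memLp_shortTimeFourier φ f p).aestronglyMeasurable (hle f)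

theorem exists_eLpNorm_le_mul_eLpNorm_shortTimeFourier {φ : 𝓢(V, ℂ)} (hφ : φ ≠ 0) {p : ℝ≥0∞}
    (hp1 : 1 ≤ p) (hp2 : p ≤ 2) :
    ∃ C ≠ ∞, ∀ f : 𝓢(V, ℂ), eLpNorm f p volume ≤ C * eLpNorm (shortTimeFourier φ f) p volume := by
  obtain ⟨C, hC, hle⟩ := exists_eLpNorm_pow_three_mul_eLpNorm_le φ hp1 hp2
  obtain ⟨χ, hχ⟩ := exists_schwartzMap_eq_pow_succ φ 2
  have hχ_top : eLpNorm χ p volume ≠ ∞ := (χ.eLpNorm_lt_top p volume).ne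
  have hχ_zero : eLpNorm χ p volume ≠ 0 := fun h => by
    rw [eLpNorm_eq_zero_iff χ.continuous.aestronglyMeasurable (one_pos.trans_le hp1).ne',
      χ.continuous.ae_eq_iff_eq volume continuous_zero] at h
    exact hφ (SchwartzMap.ext fun y => by simpa [hχ] using congrFun h y)
  refine ⟨C / eLpNorm χ p volume, ENNReal.div_ne_top hC hχ_zero, fun f => ?_⟩
  rw [ENNReal.mul_comm_div, ← mul_div_assoc,
    ENNReal.le_div_iff_mul_le (.inl hχ_zero) (.inl hχ_top), mul_comm, hχ]
  exact hle f

theorem stmt5_general {φ : 𝓢(V, ℂ)} (hφ : φ ≠ 0) {p : ℝ} (hp1 : 1 ≤ p) (hp2 : p ≤ 2) :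
    ∃ C > (0 : ℝ), ∀ f : 𝓢(V, ℂ), (∫ x, ‖f x‖ ^ p) ^ (1 / p) ≤
      C * (∫ z, ‖shortTimeFourier φ f z‖ ^ p) ^ (1 / p) := by
  obtain ⟨C, hC, hle⟩ := exists_eLpNorm_le_mul_eLpNorm_shortTimeFourier hφ
    (ENNReal.one_le_ofReal.mpr hp1) (by simpa using ENNReal.ofReal_le_ofReal hp2)
  refine ⟨C.toReal + 1, by positivity, fun f => ?_⟩
  have hf : MemLp f (.ofReal p) volume := f.memLp _ volume
  have hV : MemLp (shortTimeFourier φ f) (.ofReal p) volume := memLp_shortTimeFourier φ f _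
  rw [← toReal_eLpNorm_ofReal (by positivity) hf.1, ← toReal_eLpNorm_ofReal (by positivity) hV.1]
  calc (eLpNorm f (.ofReal p) volume).toReal
      ≤ C.toReal * (eLpNorm (shortTimeFourier φ f) (.ofReal p) volume).toReal := by
        rw [← ENNReal.toReal_mul]
        exact ENNReal.toReal_mono (ENNReal.mul_ne_top hC hV.eLpNorm_ne_top) (hle f)
    _ ≤ (C.toReal + 1) * (eLpNorm (shortTimeFourier φ f) (.ofReal p) volume).toReal := by
        gcongr
        linarith

end Embedding

section Gaussian

theorem one_add_pow_mul_exp_neg_sq_le (N : ℕ) {t : ℝ} (ht : 0 ≤ t) :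
    (1 + t) ^ N * Real.exp (-t ^ 2 / 2) ≤ N.factorial * Real.exp 2 := by
  have h := Real.pow_div_factorial_le_exp (1 + t) (by linarith) N
  rw [div_le_iff₀ (by positivity)] at h
  calc (1 + t) ^ N * Real.exp (-t ^ 2 / 2)
      ≤ Real.exp (1 + t) * N.factorial * Real.exp (-t ^ 2 / 2) := by gcongr
    _ = N.factorial * Real.exp (1 + t + -t ^ 2 / 2) := by rw [Real.exp_add (1 + t)]; ring
    _ ≤ N.factorial * Real.exp 2 := by
        gcongr
        nlinarith [sq_nonneg (t - 1)]

theorem norm_iteratedFDeriv_exp (i : ℕ) (t : ℝ) : ‖iteratedFDeriv ℝ i Real.exp t‖ = Real.exp t := by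
  rw [norm_iteratedFDeriv_eq_norm_iteratedDeriv, iteratedDeriv_eq_iterate, Real.iter_deriv_exp,
    norm_of_nonneg (Real.exp_pos _).le]

theorem exists_norm_iteratedFDeriv_exp_comp_le {V : Type*} [NormedAddCommGroup V] [NormedSpace ℝ V]
    {u : V → ℝ} (hu : u.HasTemperateGrowth) (n : ℕ) :
    ∃ m : ℕ, ∃ C ≥ (0 : ℝ), ∀ x,
      ‖iteratedFDeriv ℝ n (Real.exp ∘ u) x‖ ≤ C * (1 + ‖x‖) ^ m * Real.exp (u x) := by
  obtain ⟨m, C, hC, hle⟩ := hu.norm_iteratedFDeriv_le_uniform n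
  have hderiv (x : V) (i : ℕ) (hi : 1 ≤ i) (hin : i ≤ n) :
      ‖iteratedFDeriv ℝ i u x‖ ≤ ((1 + C) * (1 + ‖x‖) ^ m) ^ i := by
    calc ‖iteratedFDeriv ℝ i u x‖ ≤ C * (1 + ‖x‖) ^ m := hle i hin x
      _ ≤ (1 + C) * (1 + ‖x‖) ^ m := by gcongr; linarith
      _ ≤ ((1 + C) * (1 + ‖x‖) ^ m) ^ i :=
        le_self_pow₀ (one_le_mul_of_one_le_of_one_le (by linarith) (one_le_pow₀ (by simp)))
          (by omega)
  refine ⟨m * n, n.factorial * (1 + C) ^ n, by positivity, fun x => ?_⟩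
  calc ‖iteratedFDeriv ℝ n (Real.exp ∘ u) x‖
      ≤ n.factorial * Real.exp (u x) * ((1 + C) * (1 + ‖x‖) ^ m) ^ n :=
        norm_iteratedFDeriv_comp_le Real.contDiff_exp hu.1 (mod_cast le_top) x
          (fun i _ => (norm_iteratedFDeriv_exp i (u x)).le) (hderiv x)
    _ = n.factorial * (1 + C) ^ n * (1 + ‖x‖) ^ (m * n) * Real.exp (u x) := by
        rw [mul_pow, pow_mul]
        ring

variable (V : Type*) [NormedAddCommGroup V] [InnerProductSpace ℝ V]

theorem exists_norm_pow_mul_norm_iteratedFDeriv_exp_neg_sq_le (k n : ℕ) : ∃ A, ∀ x : V,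
    ‖x‖ ^ k * ‖iteratedFDeriv ℝ n (fun x : V => Real.exp (-‖x‖ ^ 2 / 2)) x‖ ≤ A := by
  have hq : (fun x : V => -‖x‖ ^ 2 / 2).HasTemperateGrowth := by
    simp only [div_eq_mul_inv]
    fun_prop
  obtain ⟨m, C, hC, hle⟩ := exists_norm_iteratedFDeriv_exp_comp_le hq n
  refine ⟨C * ((k + m).factorial * Real.exp 2), fun x => ?_⟩
  calc ‖x‖ ^ k * ‖iteratedFDeriv ℝ n (fun x : V => Real.exp (-‖x‖ ^ 2 / 2)) x‖
      ≤ (1 + ‖x‖) ^ k * (C * (1 + ‖x‖) ^ m * Real.exp (-‖x‖ ^ 2 / 2)) := by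
        gcongr
        · linarith
        · exact hle x
    _ = C * ((1 + ‖x‖) ^ (k + m) * Real.exp (-‖x‖ ^ 2 / 2)) := by
        rw [pow_add]
        ring
    _ ≤ C * ((k + m).factorial * Real.exp 2) :=
        mul_le_mul_of_nonneg_left (one_add_pow_mul_exp_neg_sq_le _ (norm_nonneg x)) hC

/-- The Gaussian `y ↦ e^{-‖y‖²/2}` as a Schwartz function: the window of the theorem. It is
complex-valued, as windows are in `shortTimeFourier`. -/
def gaussianSchwartz : 𝓢(V, ℂ) :=
  postcompCLM Complex.ofRealCLM
    { toFun := fun y => Real.exp (-‖y‖ ^ 2 / 2)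
      smooth' := ((contDiff_norm_sq ℝ).neg.div_const 2).exp
      decay' := exists_norm_pow_mul_norm_iteratedFDeriv_exp_neg_sq_le V }

theorem gaussianSchwartz_apply (y : V) :
    gaussianSchwartz V y = (Real.exp (-‖y‖ ^ 2 / 2) : ℝ) := rfl

theorem gaussianSchwartz_ne_zero : gaussianSchwartz V ≠ 0 := fun h => by
  simpa [gaussianSchwartz_apply] using congrArg (· 0) h

end Gaussian

theorem stft_eq_shortTimeFourier (d : ℕ) (f : E d → ℂ) :
    stft d f = shortTimeFourier (gaussianSchwartz (E d)) f := by
  ext z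
  rw [stft, shortTimeFourier]
  congr with y
  simp [pkbar, wavePacket, gaussianSchwartz_apply, ← Complex.exp_conj, conj_ofNat]

/-- the embedding `M^p ↪ L^p` for `1 < p ≤ 2`:
`‖f‖_{L^p(ℝ^d)} ≤ C·‖V_g f‖_{L^p(ℝ^{2d})}` for Schwartz `f`. -/
theorem stmt5 (d : ℕ) (hd : 1 ≤ d) (p : ℝ) (hp1 : 1 < p) (hp2 : p ≤ 2) :
    ∃ C > (0 : ℝ), ∀ f : SchwartzMap (E d) ℂ,
      (∫ x : E d, ‖f x‖ ^ p) ^ (1 / p) ≤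
        C * (∫ z : P d, ‖stft d (⇑f) z‖ ^ p) ^ (1 / p) := by
  simpa only [stft_eq_shortTimeFourier] using
    stmt5_general (gaussianSchwartz_ne_zero (E d)) hp1.le hp2
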